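/- arXiv:1901.06290 — 2 statements merged into one kernel-verified Lean document; each statement's English description precedes it below -/
import Mathlib

section
/- There exists a compact, totally disconnected subset X of [0,1] (hence a compact, doubling metric space of topological dimension 0) such that dimH(X) = 1 and every metric space Y for which there exists a bi-Hölder homeomorphism f : X → Y satisfies dimH(Y) ≥ 1. Consequently X has Hölder dimension 1. -/
open scoped ENNReal

/-- There is a `(l, a, b)`-bi-Hölder homeomorphism from `X` onto `Y`. -/
def BiHolderEquivTo (X : Type*) [MetricSpace X] (Y : Type*) [MetricSpace Y] : Prop :=
  ∃ (l a b : ℝ) (f : X → Y), 0 < l ∧ 0 < a ∧ 0 < b ∧ Function.Surjective f ∧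
    ∀ x y : X, (1 / l) * dist x y ^ a ≤ dist (f x) (f y) ∧
      dist (f x) (f y) ≤ l * dist x y ^ b

/-- The Hausdorff dimension of the metric space `Y` (as a whole). -/
noncomputable def dimHSpace (Y : Type*) [MetricSpace Y] : ℝ≥0∞ :=
  dimH (Set.univ : Set Y)

/-- The Hölder dimension of `X`: the infimum of the Hausdorff dimensions of all metric spaces
bi-Hölder homeomorphic to `X`. -/
noncomputable def holderDim (X : Type*) [MetricSpace X] : ℝ≥0∞ :=
  ⨅ (Y : Type) (mY : MetricSpace Y) (_ : @BiHolderEquivTo X _ Y mY), @dimHSpace Y mY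

/-!
Remove from `[0, 1]` tiny open intervals with dense centres, so small that those meeting `[0, t]`
have radius at most `exp (-1 / t)`. A Hölder map `f` on the remaining set `X` becomes real-valued
after composition with the distance to `f 0`, and then extends to a Hölder function `g` on `ℝ`. On
`[0, t]` the function `g` attains all values between `g 0` and `g t`, whereas the image of the
removed intervals has measure `O(exp (-r / t))` for some `r > 0`, which is smaller than any power of
`t`. If the distance from `f 0` to `f t` is bounded below by a power of `t`, then `|g t - g 0|`
exceeds this measure for small `t ∈ X`, so `g '' X` has positive measure and `f '' X` has dimension
at least `1`.
-/

open Set MeasureTheory Filter Metric Topology NNReal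

lemma exists_holderWith_extend_real {α : Type*} [PseudoMetricSpace α] {s : Set α} {f : s → ℝ}
    {C r : ℝ≥0} (hf : HolderWith C r f) (hr₀ : 0 < r) (hr₁ : r ≤ 1) :
    ∃ g : α → ℝ, HolderWith C r g ∧ ∀ x : s, g x = f x := by
  -- For `r ≤ 1` a Hölder function is a Lipschitz function on the snowflaked space.
  let F : Snowflaking α r (NNReal.coe_pos.2 hr₀) (NNReal.coe_le_one.2 hr₁) → ℝ :=
    Function.extend Subtype.val f 0 ∘ Snowflaking.ofSnowflaking
  have hF : LipschitzOnWith C F (Snowflaking.ofSnowflaking ⁻¹' s) := by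
    intro x hx y hy
    have extend_eq (z : α) (hz : z ∈ s) : Function.extend Subtype.val f 0 z = f ⟨z, hz⟩ :=
      Subtype.val_injective.extend_apply f 0 ⟨z, hz⟩
    simp only [F, Function.comp_apply, extend_eq _ hx, extend_eq _ hy]
    exact hf _ _
  obtain ⟨G, hG, hGF⟩ := hF.extend_real
  refine ⟨G ∘ Snowflaking.toSnowflaking, fun x y => hG _ _, fun x => ?_⟩
  exact (hGF x.2).symm.trans (Subtype.val_injective.extend_apply f 0 x)

lemma holderWith_of_dist_le {α β : Type*} [PseudoMetricSpace α] [PseudoMetricSpace β]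
    {f : α → β} {C r : ℝ≥0} (hf : ∀ x y, dist (f x) (f y) ≤ C * dist x y ^ (r : ℝ)) :
    HolderWith C r f := fun x y => by
  rw [edist_nndist, edist_nndist, ← ENNReal.coe_rpow_of_nonneg _ r.coe_nonneg]
  exact_mod_cast hf x y

lemma volume_image_iUnion_le_of_holderWith {α ι : Type*} [PseudoEMetricSpace α] [Countable ι]
    {g : α → ℝ} {C r : ℝ≥0} (hg : HolderWith C r g) (s : ι → Set α) :
    volume (g '' ⋃ i, s i) ≤ ∑' i, C * ediam (s i) ^ (r : ℝ) := by
  rw [image_iUnion]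
  exact (measure_iUnion_le _).trans <| ENNReal.tsum_le_tsum fun i =>
    (Real.volume_le_diam _).trans (hg.ediam_image_le _)

lemma edist_le_volume_image_uIcc {g : ℝ → ℝ} {a b : ℝ} (hg : ContinuousOn g (uIcc a b)) :
    edist (g a) (g b) ≤ volume (g '' uIcc a b) := by
  rw [edist_comm, edist_dist, Real.dist_eq, ← Real.volume_interval]
  exact measure_mono (intermediate_value_uIcc hg)

lemma one_le_dimH_of_volume_ne_zero {s : Set ℝ} (hs : volume s ≠ 0) : 1 ≤ dimH s := by
  rw [← hausdorffMeasure_real] at hs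
  exact le_dimH_of_hausdorffMeasure_ne_zero (d := 1) (by simpa using hs)

lemma eventually_mul_exp_neg_div_lt_mul_rpow {r c : ℝ} (hr : 0 < r) (hc : 0 < c) (M a : ℝ) :
    ∀ᶠ t in 𝓝[>] (0 : ℝ), M * Real.exp (-(r / t)) < c * t ^ a := by
  have hlim := ((tendsto_rpow_mul_exp_neg_mul_atTop_nhds_zero a r hr).comp
    tendsto_inv_nhdsGT_zero).const_mul M
  rw [mul_zero] at hlim
  filter_upwards [hlim.eventually_lt_const hc, self_mem_nhdsWithin] with t hlt (ht : 0 < t)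
  have hta : 0 < t ^ a := Real.rpow_pos_of_pos ht a
  have hexp : Real.exp (-(r / t)) = (t⁻¹ ^ a * Real.exp (-r * t⁻¹)) * t ^ a := by
    rw [Real.inv_rpow ht.le, div_eq_mul_inv, neg_mul]
    field_simp
  rw [hexp, ← mul_assoc]
  exact mul_lt_mul_of_pos_right hlt hta

/-- The centres of the intervals removed from `[0, 1]` to form `thinGapSet`: a dense sequence of
positive reals. -/
noncomputable def gapCenter (i : ℕ) : ℝ := TopologicalSpace.denseSeq (Ioi (0 : ℝ)) i

/-- The radii of the intervals removed from `[0, 1]` to form `thinGapSet`. The term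
`2 / gapCenter i` makes the gaps near `0` smaller than any power of their distance to `0`; the term
`i` makes every positive power of the radii summable. -/
noncomputable def gapRadius (i : ℕ) : ℝ := Real.exp (-(2 / gapCenter i + i))

/-- The unit interval with countably many tiny open intervals ("gaps") with dense centres removed;
this is the set of Hölder dimension `1`. -/
noncomputable def thinGapSet : Set ℝ := Icc 0 1 \ ⋃ i, ball (gapCenter i) (gapRadius i)

lemma gapCenter_pos (i : ℕ) : 0 < gapCenter i :=
  (TopologicalSpace.denseSeq (Ioi (0 : ℝ)) i).2

lemma gapRadius_pos (i : ℕ) : 0 < gapRadius i := Real.exp_pos _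

lemma gapRadius_le_half_gapCenter (i : ℕ) : gapRadius i ≤ gapCenter i / 2 := by
  have hc := gapCenter_pos i
  have hle : 2 / gapCenter i ≤ Real.exp (2 / gapCenter i + i) := by
    have := Real.add_one_le_exp (2 / gapCenter i + i)
    have : (0 : ℝ) ≤ i := i.cast_nonneg
    linarith
  rw [gapRadius, Real.exp_neg, ← inv_div 2]
  exact inv_anti₀ (by positivity) hle

lemma gapRadius_le_exp {i : ℕ} {t : ℝ} (hi : gapCenter i ≤ 2 * t) :
    gapRadius i ≤ Real.exp (-(1 / t)) * Real.exp (-i) := by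
  have hc := gapCenter_pos i
  have : 1 / t ≤ 2 / gapCenter i := by
    rw [div_le_div_iff₀ (by linarith) hc]
    linarith
  rw [gapRadius, ← Real.exp_add]
  gcongr
  linarith

lemma exists_gapCenter_mem_Ioo {a b : ℝ} (ha : 0 ≤ a) (hab : a < b) :
    ∃ i, gapCenter i ∈ Ioo a b := by
  obtain ⟨c, hac, hcb⟩ := exists_between hab
  exact (TopologicalSpace.denseRange_denseSeq (Ioi (0 : ℝ))).exists_mem_open
    (isOpen_Ioo.preimage continuous_subtype_val) ⟨⟨c, ha.trans_lt hac⟩, hac, hcb⟩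

lemma thinGapSet_subset_Icc : thinGapSet ⊆ Icc 0 1 := sdiff_subset

lemma isCompact_thinGapSet : IsCompact thinGapSet :=
  isCompact_Icc.diff (isOpen_iUnion fun _ => isOpen_ball)

lemma gapCenter_notMem_thinGapSet (i : ℕ) : gapCenter i ∉ thinGapSet := fun h =>
  h.2 (mem_iUnion_of_mem i (mem_ball_self (gapRadius_pos i)))

lemma zero_mem_thinGapSet : (0 : ℝ) ∈ thinGapSet := by
  refine ⟨unitInterval.zero_mem, ?_⟩
  simp only [mem_iUnion, not_exists, mem_ball, not_lt, dist_zero_left, Real.norm_eq_abs]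
  intro i
  rw [abs_of_pos (gapCenter_pos i)]
  linarith [gapRadius_le_half_gapCenter i, gapCenter_pos i]

lemma isTotallyDisconnected_thinGapSet : IsTotallyDisconnected thinGapSet := by
  intro s hs hconn
  by_contra hnontriv
  obtain ⟨x, hx, y, hy, hxy⟩ := (not_subsingleton_iff.1 hnontriv).exists_lt
  obtain ⟨i, hi⟩ := exists_gapCenter_mem_Ioo (hs hx).1.1 hxy
  exact gapCenter_notMem_thinGapSet i
    (hs (hconn.Icc_subset hx hy (Ioo_subset_Icc_self hi)))

lemma Icc_diff_thinGapSet_subset {t : ℝ} (ht : t ≤ 1) :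
    Icc 0 t \ thinGapSet ⊆
      ⋃ i : {i // gapCenter i ≤ 2 * t}, ball (gapCenter i) (gapRadius i) := by
  rintro x ⟨⟨hx0, hxt⟩, hx⟩
  obtain ⟨i, hi⟩ : ∃ i, x ∈ ball (gapCenter i) (gapRadius i) := by
    by_contra hgap
    exact hx ⟨⟨hx0, hxt.trans ht⟩, by rwa [mem_iUnion]⟩
  have hdist : gapCenter i - x < gapRadius i :=
    (le_abs_self _).trans_lt (by rwa [mem_ball', Real.dist_eq] at hi)
  refine mem_iUnion_of_mem ⟨i, ?_⟩ hi
  linarith [gapRadius_le_half_gapCenter i]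

lemma ediam_gap_rpow_le {i : ℕ} {t : ℝ} (hi : gapCenter i ≤ 2 * t) (r : ℝ≥0) :
    ediam (ball (gapCenter i) (gapRadius i)) ^ (r : ℝ) ≤
      ENNReal.ofReal (2 ^ (r : ℝ) * Real.exp (-(r / t)) * Real.exp (-r) ^ i) := by
  have hdiam : ediam (ball (gapCenter i) (gapRadius i)) ≤ ENNReal.ofReal (2 * gapRadius i) := by
    rw [Real.ball_eq_Ioo, Real.ediam_Ioo]
    exact (congrArg _ (by ring)).le
  calc ediam (ball (gapCenter i) (gapRadius i)) ^ (r : ℝ)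
      ≤ ENNReal.ofReal (2 * (Real.exp (-(1 / t)) * Real.exp (-i))) ^ (r : ℝ) := by
        gcongr
        exact hdiam.trans (ENNReal.ofReal_le_ofReal (by gcongr; exact gapRadius_le_exp hi))
    _ = ENNReal.ofReal (2 ^ (r : ℝ) * Real.exp (-(r / t)) * Real.exp (-r) ^ i) := by
        rw [ENNReal.ofReal_rpow_of_nonneg (by positivity) r.coe_nonneg,
          Real.mul_rpow (by positivity) (by positivity),
          Real.mul_rpow (by positivity) (by positivity), ← Real.exp_mul, ← Real.exp_mul,
          ← Real.exp_nat_mul, mul_assoc]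
        ring_nf

lemma exists_volume_image_Icc_diff_thinGapSet_le {g : ℝ → ℝ} {C r : ℝ≥0}
    (hg : HolderWith C r g) (hr : 0 < r) :
    ∃ M : ℝ, ∀ t ≤ 1,
      volume (g '' (Icc 0 t \ thinGapSet)) ≤ ENNReal.ofReal (M * Real.exp (-(r / t))) := by
  have hsum : Summable fun i : ℕ => Real.exp (-r) ^ i :=
    summable_geometric_of_lt_one (Real.exp_pos _).le (by simpa using hr)
  refine ⟨C * (2 ^ (r : ℝ) * ∑' i : ℕ, Real.exp (-r) ^ i), fun t ht => ?_⟩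
  calc volume (g '' (Icc 0 t \ thinGapSet))
      ≤ volume (g '' ⋃ i : {i // gapCenter i ≤ 2 * t}, ball (gapCenter i) (gapRadius i)) := by
        gcongr
        exact Icc_diff_thinGapSet_subset ht
    _ ≤ ∑' i : {i // gapCenter i ≤ 2 * t},
          C * ediam (ball (gapCenter i) (gapRadius i)) ^ (r : ℝ) :=
        volume_image_iUnion_le_of_holderWith hg _
    _ ≤ ∑' i : {i // gapCenter i ≤ 2 * t},
          C * ENNReal.ofReal (2 ^ (r : ℝ) * Real.exp (-(r / t)) * Real.exp (-r) ^ (i : ℕ)) :=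
        ENNReal.tsum_le_tsum fun i => by gcongr; exact ediam_gap_rpow_le i.2 r
    _ ≤ ∑' i : ℕ,
          C * ENNReal.ofReal (2 ^ (r : ℝ) * Real.exp (-(r / t)) * Real.exp (-r) ^ i) :=
        ENNReal.tsum_comp_le_tsum_of_injective Subtype.val_injective _
    _ = ENNReal.ofReal
          (C * (2 ^ (r : ℝ) * ∑' i : ℕ, Real.exp (-r) ^ i) * Real.exp (-(r / t))) := by
        rw [ENNReal.tsum_mul_left, ← ENNReal.ofReal_tsum_of_nonneg (fun i => by positivity)
          (hsum.mul_left _), hsum.tsum_mul_left, ← ENNReal.ofReal_coe_nnreal,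
          ← ENNReal.ofReal_mul C.coe_nonneg]
        ring_nf

lemma exists_dist_le_of_volume_image_eq_zero {g : ℝ → ℝ} {C r : ℝ≥0}
    (hg : HolderWith C r g) (hr : 0 < r) :
    ∃ M : ℝ, ∀ t ∈ Ioc (0 : ℝ) 1, volume (g '' (Icc 0 t ∩ thinGapSet)) = 0 →
      dist (g 0) (g t) ≤ M * Real.exp (-(r / t)) := by
  obtain ⟨M, hM⟩ := exists_volume_image_Icc_diff_thinGapSet_le hg hr
  refine ⟨max M 0, fun t ht hnull => ?_⟩
  rw [← ENNReal.ofReal_le_ofReal_iff (by positivity), ← edist_dist]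
  calc edist (g 0) (g t)
      ≤ volume (g '' Icc 0 t) := by
        rw [← uIcc_of_le ht.1.le]
        exact edist_le_volume_image_uIcc (hg.continuous hr).continuousOn
    _ ≤ volume (g '' (Icc 0 t ∩ thinGapSet)) + volume (g '' (Icc 0 t \ thinGapSet)) := by
        nth_rw 1 [← inter_union_sdiff (Icc 0 t) thinGapSet, image_union]
        exact measure_union_le _ _
    _ ≤ ENNReal.ofReal (max M 0 * Real.exp (-(r / t))) := by
        rw [hnull, zero_add]
        exact (hM t ht.2).trans (ENNReal.ofReal_le_ofReal (by gcongr; exact le_max_left _ _))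

lemma eventually_volume_inter_thinGapSet_ne_zero :
    ∀ᶠ t in 𝓝[>] (0 : ℝ), volume (Icc 0 t ∩ thinGapSet) ≠ 0 := by
  obtain ⟨M, hM⟩ := exists_dist_le_of_volume_image_eq_zero (holderWith_id (X := ℝ)) one_pos
  filter_upwards [eventually_mul_exp_neg_div_lt_mul_rpow one_pos one_pos M 1,
    Ioc_mem_nhdsGT one_pos] with t hdecay ht hnull
  have hle := hM t ht (by simpa using hnull)
  simp only [id_eq, dist_zero_left, Real.norm_eq_abs, abs_of_pos ht.1, NNReal.coe_one] at hle
  rw [Real.rpow_one, one_mul] at hdecay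
  exact hle.not_gt hdecay

lemma dimH_thinGapSet : dimH thinGapSet = 1 := by
  obtain ⟨t, ht⟩ := eventually_volume_inter_thinGapSet_ne_zero.exists
  apply le_antisymm
  · exact (dimH_mono (subset_univ _)).trans_eq Real.dimH_univ
  · exact one_le_dimH_of_volume_ne_zero (mt (measure_mono_null inter_subset_right) ht)

lemma frequently_mem_thinGapSet : ∃ᶠ t in 𝓝[>] (0 : ℝ), t ∈ thinGapSet := by
  rw [frequently_iff]
  intro U hU
  obtain ⟨u, hu, hIoc⟩ := mem_nhdsGT_iff_exists_Ioc_subset.1 hU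
  obtain ⟨t, hvol, ht⟩ :=
    (eventually_volume_inter_thinGapSet_ne_zero.and (Ioc_mem_nhdsGT hu)).exists
  have hnontriv : (Icc 0 t ∩ thinGapSet).Nontrivial :=
    not_subsingleton_iff.1 fun hsub => hvol (hsub.measure_zero volume)
  obtain ⟨p, hp, hp0⟩ := hnontriv.exists_ne 0
  exact ⟨p, hIoc ⟨hp.1.1.lt_of_ne' hp0, hp.1.2.trans ht.2⟩, hp.2⟩

lemma volume_range_ne_zero_of_holderWith {f : thinGapSet → ℝ} {C r : ℝ≥0} {c a : ℝ}
    (hr : 0 < r) (hc : 0 < c) (hf : HolderWith C r f)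
    (hlower : ∀ x, c * dist ⟨0, zero_mem_thinGapSet⟩ x ^ a ≤
      dist (f ⟨0, zero_mem_thinGapSet⟩) (f x)) :
    volume (range f) ≠ 0 := by
  intro hnull
  have hedist (x y : thinGapSet) : edist x y ≤ (1 : ℝ≥0) := by
    rw [edist_dist, ENNReal.coe_one, ENNReal.ofReal_le_one]
    simpa [Subtype.dist_eq] using
      Real.dist_le_of_mem_Icc (thinGapSet_subset_Icc x.2) (thinGapSet_subset_Icc y.2)
  have hs : 0 < min r 1 := lt_min hr one_pos
  obtain ⟨g, hg, hgf⟩ := exists_holderWith_extend_real (hf.of_le hedist (min_le_left r 1)) hs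
    (min_le_right r 1)
  obtain ⟨M, hM⟩ := exists_dist_le_of_volume_image_eq_zero hg hs
  obtain ⟨p, hp, hdecay, hp01⟩ := (frequently_mem_thinGapSet.and_eventually
    ((eventually_mul_exp_neg_div_lt_mul_rpow (NNReal.coe_pos.2 hs) hc M a).and
      (Ioc_mem_nhdsGT one_pos))).exists
  have himage : volume (g '' (Icc 0 p ∩ thinGapSet)) = 0 := by
    refine measure_mono_null ?_ hnull
    rintro _ ⟨x, ⟨-, hx⟩, rfl⟩
    exact ⟨⟨x, hx⟩, (hgf _).symm⟩
  have hupper := hM p hp01 himage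
  rw [hgf ⟨0, zero_mem_thinGapSet⟩, hgf ⟨p, hp⟩] at hupper
  have hlow := hlower ⟨p, hp⟩
  rw [Subtype.dist_eq, dist_zero_left, Real.norm_of_nonneg hp01.1.le] at hlow
  exact (hlow.trans hupper).not_gt hdecay

lemma one_le_dimH_range_of_holderWith {Y : Type*} [MetricSpace Y] {f : thinGapSet → Y}
    {C r : ℝ≥0} {c a : ℝ} (hr : 0 < r) (hc : 0 < c) (hf : HolderWith C r f)
    (hlower : ∀ x, c * dist ⟨0, zero_mem_thinGapSet⟩ x ^ a ≤
      dist (f ⟨0, zero_mem_thinGapSet⟩) (f x)) :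
    1 ≤ dimH (range f) := by
  let φ : Y → ℝ := dist (f ⟨0, zero_mem_thinGapSet⟩)
  have hφ : LipschitzWith 1 φ := LipschitzWith.dist_right _
  have hφf : HolderWith C r (φ ∘ f) := by simpa using hφ.holderWith.comp hf
  have hvol : volume (range (φ ∘ f)) ≠ 0 :=
    volume_range_ne_zero_of_holderWith hr hc hφf fun x => by
      simpa [φ, Real.dist_eq] using hlower x
  calc 1 ≤ dimH (range (φ ∘ f)) := one_le_dimH_of_volume_ne_zero hvol
    _ = dimH (φ '' range f) := by rw [range_comp]
    _ ≤ dimH (range f) := hφ.dimH_image_le _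

lemma BiHolderEquivTo.refl (X : Type*) [MetricSpace X] : BiHolderEquivTo X X :=
  ⟨1, 1, 1, id, one_pos, one_pos, one_pos, Function.surjective_id, fun x y => by simp⟩

lemma dimHSpace_coe {X : Type*} [MetricSpace X] (s : Set X) : dimHSpace s = dimH s := by
  rw [dimHSpace, ← isometry_subtype_coe.dimH_image, image_univ, Subtype.range_coe]

lemma holderDim_le_dimHSpace (X : Type) [MetricSpace X] : holderDim X ≤ dimHSpace X :=
  iInf_le_of_le X <| iInf_le_of_le _ <| iInf_le _ (BiHolderEquivTo.refl X)

lemma holderDim_coe_eq_dimH {α : Type} [MetricSpace α] {s : Set α}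
    (hs : ∀ (Y : Type) [MetricSpace Y], BiHolderEquivTo s Y → dimH s ≤ dimHSpace Y) :
    holderDim s = dimH s :=
  le_antisymm ((holderDim_le_dimHSpace s).trans_eq (dimHSpace_coe s))
    (le_iInf fun Y => le_iInf fun _ => le_iInf fun h => hs Y h)

theorem statement5_general.{u} :
    ∃ X : Set ℝ, X ⊆ Icc 0 1 ∧ IsCompact X ∧ IsTotallyDisconnected X ∧ dimH X = 1 ∧
      ∃ x₀ : X, ∀ (Y : Type u) [MetricSpace Y] (f : X → Y) (l a b : ℝ), 0 < l → 0 < b →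
        (∀ x, (1 / l) * dist x₀ x ^ a ≤ dist (f x₀) (f x)) →
        (∀ x y, dist (f x) (f y) ≤ l * dist x y ^ b) → 1 ≤ dimH (range f) := by
  refine ⟨thinGapSet, thinGapSet_subset_Icc, isCompact_thinGapSet,
    isTotallyDisconnected_thinGapSet, dimH_thinGapSet, ⟨0, zero_mem_thinGapSet⟩, ?_⟩
  intro Y _ f l a b hl hb hlower hupper
  lift l to ℝ≥0 using hl.le
  lift b to ℝ≥0 using hb.le
  exact one_le_dimH_range_of_holderWith (NNReal.coe_pos.1 hb) (one_div_pos.2 hl)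
    (holderWith_of_dist_le hupper) hlower

/-- There is a compact, totally disconnected subset `X ⊆ [0,1]` with
`dimH X = 1` such that every metric space bi-Hölder homeomorphic to `X` has Hausdorff
dimension at least `1`; consequently `X` has Hölder dimension `1`. -/
theorem statement5 :
    ∃ X : Set ℝ, X ⊆ Set.Icc (0 : ℝ) 1 ∧ IsCompact X ∧ IsTotallyDisconnected X ∧
      dimH X = 1 ∧
      (∀ (Y : Type) (mY : MetricSpace Y),
        @BiHolderEquivTo ↥X _ Y mY → 1 ≤ @dimHSpace Y mY) ∧
      holderDim ↥X = 1 := by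
  obtain ⟨X, hsub, hcpt, htd, hdim, x₀, hX⟩ := statement5_general
  have hY : ∀ (Y : Type) (mY : MetricSpace Y), BiHolderEquivTo X Y → 1 ≤ dimHSpace Y :=
    fun Y _ ⟨l, a, b, f, hl, _, hb, hsurj, hf⟩ =>
      (hX Y f l a b hl hb (fun x => (hf x₀ x).1) fun x y => (hf x y).2).trans_eq
        (congrArg dimH hsurj.range_eq)
  exact ⟨X, hsub, hcpt, htd, hdim, hY, hdim ▸ holderDim_coe_eq_dimH (hdim ▸ hY)⟩
end

section
/- Let n ≥ 1, let C ⊆ [0,1] be the standard ternary (1/3-)Cantor set, and let X = C × [0,1]^n ⊆ ℝ^{n+1} with the Euclidean metric. Then X has capacity dimension exactly n: there exists σ ∈ (0,1) such that for every sufficiently small δ > 0 there is an (n+1)-coloured open cover of X with mesh at most δ and Lebesgue number at least σδ, and no such statement holds with n colours in place of n+1 for any σ ∈ (0,1). -/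
/-- The set `C × [0,1]^n` inside Euclidean space `ℝ^{n+1}`, where `C` is the standard ternary
Cantor set (coordinate `0`) and the remaining `n` coordinates range over `[0,1]`. -/
def cantorCube (n : ℕ) : Set (EuclideanSpace ℝ (Fin (n + 1))) :=
  {x | x 0 ∈ cantorSet ∧ ∀ i : Fin (n + 1), i ≠ 0 → x i ∈ Set.Icc (0 : ℝ) 1}

/-- A family of sets is `m`-coloured if it is the union of `m` subfamilies, each consisting of
pairwise disjoint sets. -/
def IsColoured {X : Type*} (m : ℕ) (𝒰 : Set (Set X)) : Prop :=
  ∃ c : Set X → Fin m, ∀ U ∈ 𝒰, ∀ V ∈ 𝒰, U ≠ V → c U = c V → Disjoint U V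

/-- For every sufficiently small `δ > 0` the metric space `X` has an `m`-coloured open cover
with mesh at most `δ` and Lebesgue number at least `σδ`. -/
def HasColouredCovers (X : Type*) [MetricSpace X] (m : ℕ) (σ : ℝ) : Prop :=
  ∃ δ₀ : ℝ, 0 < δ₀ ∧ ∀ δ : ℝ, 0 < δ → δ ≤ δ₀ →
    ∃ 𝒰 : Set (Set X), (∀ U ∈ 𝒰, IsOpen U) ∧ (∀ x : X, ∃ U ∈ 𝒰, x ∈ U) ∧
      IsColoured m 𝒰 ∧ (∀ U ∈ 𝒰, Metric.diam U ≤ δ) ∧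
      (∀ x : X, ∃ U ∈ 𝒰, Metric.ball x (σ * δ) ⊆ U)

/-!
For the lower bound, colour the members of an open cover of `[0,1]^n` with `n` colours and let
`B i` be the union of the face `x i = 0` with the members of colour `i` meeting it. If no member of
colour `i` joined this face to the opposite one, `B i` would separate the two faces for every `i`,
and a common frontier point of the `B i`, as provided by the Poincaré–Miranda theorem, would lie in
no member of the cover. So some member has diameter at least `1`, and covers of `C × [0,1]^n` cannot
have small mesh, as they restrict to the face `{0} × [0,1]^n`. The discrete form of
Poincaré–Miranda follows from Stokes' theorem modulo two: the Jacobian of the indicator functions of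
the sets has total mass `1` on the subdivided cube, hence is nonzero on some small cube, and there
none of the indicators is constant.

For the upper bound, use the cells of `n + 1` rectangular grids. At every scale the Cantor set is
far from some arithmetic progression, whose points serve as the walls of all grids in that
direction. In the other `n` directions the grids are diagonal translates whose walls are evenly
spaced; each coordinate of a point is close to the walls of at most one grid, so one of the `n + 1`
is left.
-/

section CubicalCochains

variable {ι κ R G M : Type*}

section FaceBox

variable [DecidableEq ι] [Fintype ι]

/-- The lowest vertices of the unit cubes that tile the face of `[0, N]^ι` through the origin
spanned by the directions `S`. -/
def faceBox (N : ℕ) (S : Finset ι) : Finset (ι → ℕ) :=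
  Fintype.piFinset fun i => if i ∈ S then Finset.range N else {0}

lemma mem_faceBox {N : ℕ} {S : Finset ι} {y : ι → ℕ} :
    y ∈ faceBox N S ↔ ∀ i, (i ∈ S → y i < N) ∧ (i ∉ S → y i = 0) := by
  rw [faceBox, Fintype.mem_piFinset]
  refine forall_congr' fun i => ?_
  by_cases h : i ∈ S <;> simp [h]

lemma sum_faceBox [AddCommMonoid M] {N : ℕ} {S : Finset ι} {j : ι}
    (hj : j ∈ S) (g : (ι → ℕ) → M) :
    ∑ y ∈ faceBox N S, g y =
      ∑ y ∈ faceBox N (S.erase j), ∑ t ∈ Finset.range N, g (Function.update y j t) := by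
  rw [Finset.sum_sigma']
  refine Finset.sum_bij' (fun y _ => ⟨Function.update y j 0, y j⟩)
    (fun a _ => Function.update a.1 j a.2) ?_ ?_ ?_ ?_ ?_
  · simp only [Finset.mem_sigma, mem_faceBox, Finset.mem_range, Finset.mem_erase]
    grind
  · simp only [Finset.mem_sigma, mem_faceBox, Finset.mem_range, Finset.mem_erase]
    grind
  · simp
  · rintro ⟨y, t⟩ hy
    have hyj : 0 = y j := by simp_all [mem_faceBox]
    simp [hyj]
  · simp

end FaceBox

/-- A cubical cochain on the lattice `ι → ℕ`: `ω S x` is the value on the unit cube with lowest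
vertex `x` and edges in the directions `S`. The degree is not part of the type. -/
abbrev CubicalCochain (ι R : Type*) := Finset ι → (ι → ℕ) → R

namespace CubicalCochain

variable [DecidableEq ι]

section AddCommGroup

variable [AddCommGroup G]

/-- The sum of a cochain over the facets of a cube. The orientation signs are only those of opposite
facets, so this is the coboundary in characteristic two. -/
def coboundary (ω : CubicalCochain ι G) : CubicalCochain ι G := fun S x =>
  ∑ j ∈ S, (ω (S.erase j) (x + Pi.single j 1) - ω (S.erase j) x)

/-- Stokes' theorem: the contributions of interior facets cancel in pairs. -/
lemma sum_faceBox_coboundary [Fintype ι] (N : ℕ) (ω : CubicalCochain ι G) (S : Finset ι) :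
    ∑ y ∈ faceBox N S, ω.coboundary S y =
      ∑ j ∈ S, ∑ y ∈ faceBox N (S.erase j),
        (ω (S.erase j) (Function.update y j N) - ω (S.erase j) (Function.update y j 0)) := by
  simp only [coboundary]
  rw [Finset.sum_comm]
  refine Finset.sum_congr rfl fun j hj => ?_
  rw [sum_faceBox hj]
  refine Finset.sum_congr rfl fun y _ => ?_
  rw [← Finset.sum_range_sub fun t => ω (S.erase j) (Function.update y j t)]
  refine Finset.sum_congr rfl fun t _ => ?_
  have hstep : Function.update y j t + Pi.single j 1 = Function.update y j (t + 1) := by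
    funext m
    by_cases hm : m = j
    · subst hm; simp
    · simp [hm]
  rw [hstep]

end AddCommGroup

variable [CommRing R]

lemma coboundary_coboundary [CharP R 2] (ω : CubicalCochain ι R) :
    ω.coboundary.coboundary = 0 := by
  funext S x
  simp only [coboundary, ← Finset.sum_sub_distrib, Finset.sum_sigma', Pi.zero_apply]
  refine Finset.sum_involution (fun jk _ => ⟨jk.2, jk.1⟩) ?_ ?_ ?_ fun _ _ => rfl
  · rintro ⟨j, k⟩ -
    simp only [Finset.erase_right_comm (a := k) (b := j), add_right_comm x (Pi.single k 1)]
    linear_combination (CharTwo.two_eq_zero (R := R)) *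
      (ω ((S.erase j).erase k) (x + Pi.single j 1 + Pi.single k 1)
        - ω ((S.erase j).erase k) (x + Pi.single j 1)
        - ω ((S.erase j).erase k) (x + Pi.single k 1) + ω ((S.erase j).erase k) x)
  · rintro ⟨j, k⟩ hjk - heq
    simp_all
  · rintro ⟨j, k⟩ hjk
    simp_all [eq_comm]

lemma coboundary_mul (f : (ι → ℕ) → R) (ω : CubicalCochain ι R) (S : Finset ι) (x : ι → ℕ) :
    coboundary (fun T y => f y * ω T y) S x =
      ∑ j ∈ S, (f (x + Pi.single j 1) - f x) * ω (S.erase j) (x + Pi.single j 1) +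
        f x * ω.coboundary S x := by
  simp only [coboundary, Finset.mul_sum, ← Finset.sum_add_distrib]
  exact Finset.sum_congr rfl fun j _ => by ring

/-- The discrete analogue of the Jacobian determinant `dF i₁ ∧ ⋯ ∧ dF iₖ` for vertex functions
`F i₁, …, F iₖ`, in the form `d (F i₁ · d (F i₂ · ⋯))`. The empty product is the constant `1` on
cubes of every dimension; only cubes of dimension `k` matter. -/
def jacobian (F : κ → (ι → ℕ) → R) : List κ → CubicalCochain ι R
  | [] => 1
  | i :: l => coboundary fun S x => F i x * jacobian F l S x

lemma coboundary_jacobian [CharP R 2] (F : κ → (ι → ℕ) → R) (l : List κ) :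
    (jacobian F l).coboundary = 0 := by
  cases l with
  | nil => funext S x; simp [jacobian, coboundary]
  | cons i l => exact coboundary_coboundary _

lemma jacobian_cons_apply [CharP R 2] (F : κ → (ι → ℕ) → R) (i : κ) (l : List κ) (S : Finset ι)
    (x : ι → ℕ) :
    jacobian F (i :: l) S x =
      ∑ j ∈ S, (F i (x + Pi.single j 1) - F i x) *
        jacobian F l (S.erase j) (x + Pi.single j 1) := by
  rw [jacobian, coboundary_mul, coboundary_jacobian, Pi.zero_apply, Pi.zero_apply, mul_zero,
    add_zero]

lemma facet_subset_cube {S : Finset ι} {j : ι} (hj : j ∈ S) (x : ι → ℕ) :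
    Set.Icc (x + Pi.single j 1) (x + Pi.single j 1 + (S.erase j : Set ι).indicator 1) ⊆
      Set.Icc x (x + (S : Set ι).indicator 1) := by
  refine Set.Icc_subset_Icc le_self_add fun m => ?_
  by_cases hm : m = j <;> simp [Set.indicator_apply, hm, hj]

lemma jacobian_eq_zero_of_const_on_cube [CharP R 2] {F : κ → (ι → ℕ) → R} {k : κ} {l : List κ}
    (hk : k ∈ l) {S : Finset ι} {x : ι → ℕ}
    (hF : ∀ z ∈ Set.Icc x (x + (S : Set ι).indicator 1), F k z = F k x) :
    jacobian F l S x = 0 := by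
  induction l generalizing S x with
  | nil => simp at hk
  | cons i l ih =>
    rw [jacobian_cons_apply]
    refine Finset.sum_eq_zero fun j hj => ?_
    have hstep : F k (x + Pi.single j 1) = F k x :=
      hF _ (facet_subset_cube hj x ⟨le_rfl, le_self_add⟩)
    rcases List.mem_cons.1 hk with rfl | hkl
    · rw [hstep, sub_self, zero_mul]
    · rw [ih hkl fun z hz => (hF z (facet_subset_cube hj x hz)).trans hstep.symm, mul_zero]

lemma sum_faceBox_jacobian [Fintype ι] [CharP R 2] {F : ι → (ι → ℕ) → R} {N : ℕ}
    (hF₀ : ∀ i x, x i = 0 → F i x = 1) (hFN : ∀ i x, x i = N → F i x = 0) {l : List ι}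
    (hl : l.Nodup) : ∑ y ∈ faceBox N l.toFinset, jacobian F l l.toFinset y = 1 := by
  induction l with
  | nil => simp [faceBox, jacobian, Fintype.piFinset_singleton]
  | cons i l ih =>
    obtain ⟨hil, hl⟩ := List.nodup_cons.1 hl
    have erase_head : (i :: l).toFinset.erase i = l.toFinset := by simp [hil]
    rw [jacobian, sum_faceBox_coboundary, Finset.sum_eq_single_of_mem i (by simp)]
    · rw [erase_head, ← ih hl]
      refine Finset.sum_congr rfl fun y hy => ?_
      have hy₀ : Function.update y i 0 = y :=
        Function.update_eq_self_iff.2 ((mem_faceBox.1 hy i).2 (by simpa using hil)).symm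
      rw [hFN i _ (Function.update_self ..), hy₀, hF₀ i y (by rw [← hy₀, Function.update_self]),
        zero_mul, one_mul, zero_sub, CharTwo.neg_eq]
    · intro j hj hji
      have hjl : j ∈ l := by simpa [hji] using hj
      have vanish {v : ℕ} {r : R} (hv : ∀ x : ι → ℕ, x j = v → F j x = r) (y : ι → ℕ) :
          jacobian F l ((i :: l).toFinset.erase j) (Function.update y j v) = 0 := by
        refine jacobian_eq_zero_of_const_on_cube hjl fun z hz => ?_
        have hzj : z j = v := le_antisymm (by simpa using hz.2 j) (by simpa using hz.1 j)
        rw [hv z hzj, hv _ (Function.update_self ..)]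
      refine Finset.sum_eq_zero fun y _ => ?_
      rw [vanish (hFN j), vanish (hF₀ j), mul_zero, mul_zero, sub_zero]

end CubicalCochain

open CubicalCochain in
theorem discrete_poincare_miranda [Finite ι] {N : ℕ} {A : ι → Set (ι → ℕ)}
    (hA₀ : ∀ i x, x i = 0 → x ∈ A i) (hAN : ∀ i x, x i = N → x ∉ A i) :
    ∃ x, ∀ i, ∃ z ∈ Set.Icc x (x + 1), ¬(z ∈ A i ↔ x ∈ A i) := by
  classical
  cases nonempty_fintype ι
  by_contra! hconst
  let F : ι → (ι → ℕ) → ZMod 2 := fun i => (A i).indicator 1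
  have hsum : ∑ y ∈ faceBox N Finset.univ, jacobian F Finset.univ.toList Finset.univ y = 1 := by
    simpa using sum_faceBox_jacobian (F := F) (fun i x hx => Set.indicator_of_mem (hA₀ i x hx) 1)
      (fun i x hx => Set.indicator_of_notMem (hAN i x hx) 1) (Finset.nodup_toList Finset.univ)
  refine zero_ne_one ((Finset.sum_eq_zero fun x _ => ?_).symm.trans hsum)
  obtain ⟨i, hi⟩ := hconst x
  refine jacobian_eq_zero_of_const_on_cube (Finset.mem_toList.2 (Finset.mem_univ i)) fun z hz => ?_
  have hzx : z ∈ A i ↔ x ∈ A i := hi z (by simpa using hz)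
  simp [F, Set.indicator_apply, hzx]

end CubicalCochains

section UnitCube
variable {ι : Type*}

/-- The point `x / N` of the unit cube, with coordinates beyond `N` truncated to `1`. -/
noncomputable def gridPoint (N : ℕ) (x : ι → ℕ) : ι → unitInterval := fun i =>
  Set.projIcc 0 1 zero_le_one (x i / N : ℝ)

lemma gridPoint_apply_eq_zero {N : ℕ} {x : ι → ℕ} {i : ι} (hx : x i = 0) :
    gridPoint N x i = 0 := by
  simp [gridPoint, hx]

lemma gridPoint_apply_eq_one {N : ℕ} (hN : N ≠ 0) {x : ι → ℕ} {i : ι} (hx : x i = N) :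
    gridPoint N x i = 1 := by
  simp [gridPoint, hx, hN]

lemma dist_gridPoint_le [Fintype ι] {N : ℕ} {x z : ι → ℕ} (hz : z ∈ Set.Icc x (x + 1)) :
    dist (gridPoint N z) (gridPoint N x) ≤ 1 / N := by
  refine (dist_pi_le_iff (by positivity)).2 fun i => ?_
  have hlow : (x i : ℝ) ≤ z i := mod_cast hz.1 i
  have hhigh : (z i : ℝ) ≤ x i + 1 := mod_cast hz.2 i
  calc dist (gridPoint N z i) (gridPoint N x i)
      ≤ |(z i / N : ℝ) - x i / N| := Set.abs_projIcc_sub_projIcc zero_le_one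
    _ = (z i - x i) / N := by
        rw [← sub_div, abs_of_nonneg (div_nonneg (sub_nonneg.2 hlow) (Nat.cast_nonneg N))]
    _ ≤ 1 / N := by gcongr; linarith

/-- Poincaré–Miranda for sets: without a common frontier point the interiors of the `B i` and of
their complements cover the cube, and cells below the Lebesgue number contradict the discrete
theorem. -/
theorem exists_forall_mem_frontier_of_separates_faces [Finite ι] {B : ι → Set (ι → unitInterval)}
    (hB₀ : ∀ i x, x i = 0 → x ∈ B i) (hB₁ : ∀ i x, x i = 1 → x ∉ B i) :
    ∃ x, ∀ i, x ∈ frontier (B i) := by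
  cases nonempty_fintype ι
  by_contra! hno
  obtain ⟨ε, hε, hball⟩ := lebesgue_number_lemma_of_metric_sUnion
    (c := {V | ∃ i, V = interior (B i) ∨ V = interior (B i)ᶜ})
    (isCompact_univ (X := ι → unitInterval))
    (by rintro _ ⟨i, rfl | rfl⟩ <;> exact isOpen_interior) (by
      intro x _
      obtain ⟨i, hi⟩ := hno x
      rw [← Set.mem_compl_iff, compl_frontier_eq_union_interior] at hi
      exact hi.elim (fun h => ⟨_, ⟨i, .inl rfl⟩, h⟩) fun h => ⟨_, ⟨i, .inr rfl⟩, h⟩)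
  obtain ⟨N, hN⟩ := exists_nat_one_div_lt hε
  obtain ⟨x, hx⟩ := discrete_poincare_miranda (N := N + 1)
    (A := fun i => gridPoint (N + 1) ⁻¹' B i)
    (fun i _ hx => hB₀ i _ (gridPoint_apply_eq_zero hx))
    (fun i _ hx => hB₁ i _ (gridPoint_apply_eq_one N.succ_ne_zero hx))
  obtain ⟨_, ⟨i, hV⟩, hsub⟩ := hball (gridPoint (N + 1) x) (Set.mem_univ _)
  obtain ⟨z, hz, hzx⟩ := hx i
  have x_mem := hsub (Metric.mem_ball_self hε)
  have z_mem := hsub (Metric.mem_ball.2 <| (dist_gridPoint_le hz).trans_lt <| by simpa using hN)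
  rcases hV with rfl | rfl
  · exact hzx (iff_of_true (interior_subset z_mem :) (interior_subset x_mem :))
  · exact hzx (iff_of_false (interior_subset z_mem :) (interior_subset x_mem :))

/-- Lebesgue's covering theorem. -/
theorem exists_mem_opposite_faces_of_coloured_open_cover [Finite ι] {κ : Type*}
    {U : κ → Set (ι → unitInterval)} {c : κ → ι} (hopen : ∀ a, IsOpen (U a))
    (hcover : ∀ x, ∃ a, x ∈ U a) (hdisj : ∀ a b, a ≠ b → c a = c b → Disjoint (U a) (U b)) :
    ∃ a, ∃ x ∈ U a, ∃ y ∈ U a, x (c a) = 0 ∧ y (c a) = 1 := by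
  by_contra! hsmall
  let B : ι → Set (ι → unitInterval) := fun i =>
    {x | x i = 0 ∨ ∃ a, c a = i ∧ x ∈ U a ∧ ∃ y ∈ U a, y i = 0}
  obtain ⟨x, hx⟩ := exists_forall_mem_frontier_of_separates_faces (B := B)
    (fun i x hx₀ => .inl hx₀) (by
      rintro i x hx₁ (hx₀ | ⟨a, rfl, hxa, y, hya, hy₀⟩)
      · exact zero_ne_one (hx₀.symm.trans hx₁)
      · exact hsmall a y hya x hxa hy₀ hx₁)
  obtain ⟨a, hxa⟩ := hcover x
  by_cases hlow : ∃ y ∈ U a, y (c a) = 0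
  · have hsub : U a ⊆ B (c a) := fun z hz => .inr ⟨a, rfl, hz, hlow⟩
    exact (hx (c a)).2 (interior_maximal hsub (hopen a) hxa)
  · have hdisjoint : Disjoint (U a) (B (c a)) := by
      refine Set.disjoint_left.2 ?_
      rintro z hza (hz₀ | ⟨b, hcb, hzb, hb⟩)
      · exact hlow ⟨z, hza, hz₀⟩
      · obtain rfl : b = a := by_contra fun hba => Set.disjoint_left.1 (hdisj b a hba hcb) hzb hza
        exact hlow hb
    exact Set.disjoint_left.1 (hdisjoint.closure_right (hopen a)) hxa (hx (c a)).1

open NNReal in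
theorem not_hasColouredCovers_of_antilipschitzWith {X : Type*} [MetricSpace X] [BoundedSpace X]
    {n : ℕ} {φ : (Fin n → unitInterval) → X} {K : ℝ≥0} (hφ : Continuous φ)
    (hφK : AntilipschitzWith K φ) (σ : ℝ) : ¬ HasColouredCovers X n σ := by
  rintro ⟨δ₀, hδ₀, hcovers⟩
  obtain ⟨δ, hδ, hδδ₀, hKδ⟩ : ∃ δ, 0 < δ ∧ δ ≤ δ₀ ∧ K * δ < 1 := by
    refine ⟨min δ₀ (1 / (K + 1)), by positivity, min_le_left _ _, ?_⟩
    calc K * min δ₀ (1 / (K + 1)) ≤ K * (1 / (K + 1)) := by gcongr; exact min_le_right _ _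
      _ < 1 := by rw [mul_one_div, div_lt_one (by positivity)]; exact lt_add_one _
  obtain ⟨𝒰, hopen, hcover, ⟨c, hc⟩, hdiam, -⟩ := hcovers δ hδ hδδ₀
  obtain ⟨⟨U, hU⟩, x, hx, y, hy, hx₀, hy₁⟩ :=
    exists_mem_opposite_faces_of_coloured_open_cover (U := fun V : 𝒰 => φ ⁻¹' V)
      (c := fun V => c V) (fun V => (hopen V V.2).preimage hφ)
      (fun x => let ⟨V, hV, hxV⟩ := hcover (φ x); ⟨⟨V, hV⟩, hxV⟩)
      (fun V W hVW hcVW => (hc V V.2 W W.2 (Subtype.coe_ne_coe.2 hVW) hcVW).preimage φ)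
  have one_le : (1 : ℝ) ≤ K * δ :=
    calc (1 : ℝ) = dist (x (c U)) (y (c U)) := by rw [hx₀, hy₁]; simp [Subtype.dist_eq]
      _ ≤ dist x y := dist_le_pi_dist x y _
      _ ≤ K * dist (φ x) (φ y) := hφK.le_mul_dist x y
      _ ≤ K * δ := by
        gcongr
        exact (Metric.dist_le_diam_of_mem (Bornology.IsBounded.all U) hx hy).trans (hdiam U hU)
  exact hKδ.not_ge one_le
end UnitCube

lemma isBounded_cantorCube (n : ℕ) : Bornology.IsBounded (cantorCube n) := by
  refine ((PiLp.antilipschitzWith_ofLp 2 _).isBounded_preimage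
    (Metric.isBounded_Icc (0 : Fin (n + 1) → ℝ) 1)).subset fun x hx => ?_
  have hcoord (i : Fin (n + 1)) : x i ∈ Set.Icc (0 : ℝ) 1 := by
    by_cases hi : i = 0
    · exact hi ▸ cantorSet_subset_unitInterval hx.1
    · exact hx.2 i hi
  exact ⟨fun i => (hcoord i).1, fun i => (hcoord i).2⟩

/-- The embedding of `[0,1]^n` onto the face `{0} × [0,1]^n` of `C × [0,1]^n`. -/
def cantorCubeFace (n : ℕ) (t : Fin n → unitInterval) : cantorCube n :=
  ⟨WithLp.toLp 2 (Fin.cons 0 fun i => (t i : ℝ)), by simpa using zero_mem_cantorSet,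
    fun i hi => by obtain ⟨j, rfl⟩ := Fin.exists_succ_eq.2 hi; exact (t j).2⟩

lemma continuous_cantorCubeFace (n : ℕ) : Continuous (cantorCubeFace n) := by
  unfold cantorCubeFace
  fun_prop

lemma antilipschitzWith_cantorCubeFace (n : ℕ) : AntilipschitzWith 1 (cantorCubeFace n) := by
  refine AntilipschitzWith.of_le_mul_dist fun s t => ?_
  rw [NNReal.coe_one, one_mul, dist_pi_le_iff dist_nonneg]
  intro i
  exact PiLp.dist_apply_le (cantorCubeFace n s).1 (cantorCubeFace n t).1 i.succ

theorem not_hasColouredCovers_cantorCube (n : ℕ) (σ : ℝ) :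
    ¬ HasColouredCovers (cantorCube n) n σ :=
  haveI : BoundedSpace (cantorCube n) := boundedSpace_val_set_iff.2 (isBounded_cantorCube n)
  not_hasColouredCovers_of_antilipschitzWith (continuous_cantorCubeFace n)
    (antilipschitzWith_cantorCubeFace n) σ

/-- The covers required by `HasColouredCovers` at a single scale: an `m`-coloured open cover of `X`
with mesh at most `δ` and Lebesgue number at least `r`. -/
def HasColouredCoverAtScale (X : Type*) [MetricSpace X] (m : ℕ) (δ r : ℝ) : Prop :=
  ∃ 𝒰 : Set (Set X), (∀ U ∈ 𝒰, IsOpen U) ∧ (∀ x : X, ∃ U ∈ 𝒰, x ∈ U) ∧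
    IsColoured m 𝒰 ∧ (∀ U ∈ 𝒰, Metric.diam U ≤ δ) ∧ ∀ x : X, ∃ U ∈ 𝒰, Metric.ball x r ⊆ U

section Grids

lemma isColoured_range {X κ : Type*} [Nonempty κ] {m : ℕ} {U : κ → Set X} {c : κ → Fin m}
    (hdisj : ∀ a b, U a ≠ U b → c a = c b → Disjoint (U a) (U b)) :
    IsColoured m (Set.range U) := by
  refine ⟨c ∘ Function.invFun U, ?_⟩
  rintro _ ⟨a, rfl⟩ _ ⟨b, rfl⟩ hab hc
  have ha : U (Function.invFun U (U a)) = U a := Function.invFun_eq ⟨a, rfl⟩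
  have hb : U (Function.invFun U (U b)) = U b := Function.invFun_eq ⟨b, rfl⟩
  simpa only [ha, hb] using hdisj _ _ (by rwa [ha, hb]) hc

lemma exists_ball_subset_Ioo {a b r u : ℝ} (hb : 0 < b)
    (hu : ∀ z : ℤ, r ≤ |u - (a + z * b)|) :
    ∃ z : ℤ, Metric.ball u r ⊆ Set.Ioo (a + z * b) (a + (z + 1) * b) := by
  obtain ⟨z, ⟨hlow, hhigh⟩, -⟩ := existsUnique_zsmul_near_of_pos hb (u - a)
  rw [zsmul_eq_mul] at hlow hhigh
  push_cast at hhigh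
  have hbelow := hu z
  have habove := hu (z + 1)
  push_cast at habove
  rw [abs_of_nonneg (by linarith)] at hbelow
  rw [abs_of_nonpos (by linarith)] at habove
  refine ⟨z, ?_⟩
  rw [Real.ball_eq_Ioo]
  exact Set.Ioo_subset_Ioo (by linarith) (by linarith)

/-- Cell number `z` of the rectangular grid with walls `x i ∈ a i + ℤ b i`. -/
def gridCell {ι : Type*} (a b : ι → ℝ) (z : ι → ℤ) : Set (EuclideanSpace ℝ ι) :=
  {x | ∀ i, x i ∈ Set.Ioo (a i + z i * b i) (a i + (z i + 1) * b i)}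

variable {ι : Type*}

lemma disjoint_gridCell (a b : ι → ℝ) {z w : ι → ℤ} (hzw : z ≠ w) :
    Disjoint (gridCell a b z) (gridCell a b w) := by
  obtain ⟨i, hi⟩ := Function.ne_iff.1 hzw
  refine Set.disjoint_left.2 fun x hxz hxw => ?_
  have hdisj := Set.pairwise_disjoint_Ioo_add_zsmul (a i) (b i) hi
  simp only [Function.onFun, zsmul_eq_mul, Int.cast_add, Int.cast_one] at hdisj
  exact Set.disjoint_left.1 hdisj (hxz i) (hxw i)

lemma isOpen_gridCell [Finite ι] (a b : ι → ℝ) (z : ι → ℤ) : IsOpen (gridCell a b z) := by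
  rw [gridCell, Set.ofPred_forall]
  exact isOpen_iInter_of_finite fun i => isOpen_Ioo.preimage (by fun_prop)

variable [Fintype ι]

lemma dist_le_sqrt_card_mul {x y : EuclideanSpace ℝ ι} {s : ℝ} (hs : 0 ≤ s)
    (h : ∀ i, |x i - y i| ≤ s) : dist x y ≤ √(Fintype.card ι) * s :=
  calc dist x y = √(∑ i, dist (x i) (y i) ^ 2) := EuclideanSpace.dist_eq x y
    _ ≤ √(∑ _i : ι, s ^ 2) :=
      Real.sqrt_le_sqrt <| Finset.sum_le_sum fun i _ => pow_le_pow_left₀ dist_nonneg (h i) 2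
    _ = √(Fintype.card ι) * s := by
      rw [Finset.sum_const, Finset.card_univ, nsmul_eq_mul, Real.sqrt_mul (Nat.cast_nonneg _),
        Real.sqrt_sq hs]

lemma dist_le_of_mem_gridCell {a b : ι → ℝ} {s : ℝ} (hs : 0 ≤ s) (hb : ∀ i, b i ≤ s) {z : ι → ℤ}
    {x y : EuclideanSpace ℝ ι} (hx : x ∈ gridCell a b z) (hy : y ∈ gridCell a b z) :
    dist x y ≤ √(Fintype.card ι) * s := by
  refine dist_le_sqrt_card_mul hs fun i => ?_
  have hdist := Real.dist_le_of_mem_Icc (Set.Ioo_subset_Icc_self (hx i))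
    (Set.Ioo_subset_Icc_self (hy i))
  rw [Real.dist_eq] at hdist
  linarith [hb i]

lemma exists_ball_subset_gridCell {a b : ι → ℝ} (hb : ∀ i, 0 < b i) {r : ℝ}
    {x : EuclideanSpace ℝ ι} (hx : ∀ i, ∀ z : ℤ, r ≤ |x i - (a i + z * b i)|) :
    ∃ z, Metric.ball x r ⊆ gridCell a b z := by
  choose z hz using fun i => exists_ball_subset_Ioo (hb i) (hx i)
  refine ⟨z, fun y hy i => hz i ?_⟩
  exact (PiLp.dist_apply_le y x i).trans_lt hy

lemma hasColouredCoverAtScale_of_far_from_walls {m : ℕ} [NeZero m]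
    {X : Set (EuclideanSpace ℝ ι)} {a : Fin m → ι → ℝ} {b : ι → ℝ} {r s : ℝ} (hr : 0 < r)
    (hs : 0 ≤ s) (hb : ∀ i, b i ∈ Set.Ioc 0 s)
    (hX : ∀ x ∈ X, ∃ k, ∀ i, ∀ z : ℤ, r ≤ |x i - (a k i + z * b i)|) :
    HasColouredCoverAtScale X m (√(Fintype.card ι) * s) r := by
  let U : Fin m × (ι → ℤ) → Set X := fun p => Subtype.val ⁻¹' gridCell (a p.1) b p.2
  have hball (x : X) : ∃ V ∈ Set.range U, Metric.ball x r ⊆ V := by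
    obtain ⟨k, hk⟩ := hX x x.2
    obtain ⟨z, hz⟩ := exists_ball_subset_gridCell (fun i => (hb i).1) hk
    exact ⟨_, ⟨(k, z), rfl⟩, fun y hy => hz hy⟩
  refine ⟨Set.range U, ?_, fun x => ?_, isColoured_range (c := Prod.fst) ?_, ?_, hball⟩
  · rintro _ ⟨p, rfl⟩
    exact (isOpen_gridCell _ _ _).preimage continuous_subtype_val
  · obtain ⟨V, hV, hsub⟩ := hball x
    exact ⟨V, hV, hsub (Metric.mem_ball_self hr)⟩
  · rintro ⟨k, z⟩ ⟨_, w⟩ hne rfl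
    have hzw : z ≠ w := by rintro rfl; exact hne rfl
    exact (disjoint_gridCell (a k) b hzw).preimage _
  · rintro _ ⟨p, rfl⟩
    exact Metric.diam_le_of_forall_dist_le (by positivity) fun x hx y hy =>
      dist_le_of_mem_gridCell hs (fun i => (hb i).2) hx hy

lemma eq_of_abs_sub_mul_lt_half {t u : ℝ} {p q : ℤ} (hp : |u - p * t| < t / 2)
    (hq : |u - q * t| < t / 2) : p = q := by
  have ht : 0 < t := by linarith [abs_nonneg (u - p * t)]
  have hpq : |((p - q : ℤ) : ℝ)| * t < 1 * t :=
    calc |((p - q : ℤ) : ℝ)| * t = |(u - q * t) - (u - p * t)| := by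
          rw [← abs_of_pos ht, ← abs_mul, abs_of_pos ht]; push_cast; ring_nf
      _ ≤ |u - q * t| + |u - p * t| := abs_sub _ _
      _ < 1 * t := by linarith
  rw [mul_lt_mul_iff_left₀ ht] at hpq
  exact sub_eq_zero.1 (Int.abs_lt_one_iff.1 (mod_cast hpq))

/-- Each coordinate is close to the walls of at most one of the `m` shifted grids, as together these
walls form the lattice `t ℤ`; so with more shifts than coordinates one grid is far away in every
coordinate. -/
lemma exists_shift_far_from_walls {m : ℕ} (hm : Fintype.card ι < m) (u : ι → ℝ) (t : ℝ) :
    ∃ k : Fin m, ∀ i, ∀ z : ℤ, t / 2 ≤ |u i - (k * t + z * (m * t))| := by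
  by_contra! hclose
  choose i z hz using hclose
  have near_lattice (k : Fin m) : |u (i k) - ((k + z k * m : ℤ) : ℝ) * t| < t / 2 := by
    have wall : ((k + z k * m : ℤ) : ℝ) * t = k * t + z k * (m * t) := by
      push_cast
      ring
    rw [wall]
    exact hz k
  have i_injective : Function.Injective i := fun k l hkl => by
    have hlattice : (k + z k * m : ℤ) = l + z l * m :=
      eq_of_abs_sub_mul_lt_half (near_lattice k) (hkl ▸ near_lattice l)
    have hmod : (k : ℤ) % m = l % m := by simpa using congrArg (· % (m : ℤ)) hlattice
    rw [← Int.natCast_mod, ← Int.natCast_mod, Nat.mod_eq_of_lt k.2, Nat.mod_eq_of_lt l.2] at hmod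
    exact Fin.ext (mod_cast hmod)
  simpa [hm.not_ge] using Fintype.card_le_of_injective i i_injective

end Grids

lemma exists_mem_Icc_two_mul_of_mem_cantorSet (m : ℕ) {x : ℝ} (hx : x ∈ cantorSet) :
    ∃ a : ℤ, x ∈ Set.Icc (2 * a * (1 / 3 : ℝ) ^ m) ((2 * a + 1) * (1 / 3 : ℝ) ^ m) := by
  induction m generalizing x with
  | zero => exact ⟨0, by simpa using cantorSet_subset_unitInterval hx⟩
  | succ m ih =>
    rw [cantorSet_eq_union_halves] at hx
    rcases hx with ⟨y, hy, rfl⟩ | ⟨y, hy, rfl⟩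
    · obtain ⟨a, hlow, hhigh⟩ := ih hy
      exact ⟨a, by rw [pow_succ]; linarith, by rw [pow_succ]; linarith⟩
    · obtain ⟨a, hlow, hhigh⟩ := ih hy
      have hpow : (3 : ℝ) ^ m * (1 / 3) ^ m = 1 := by rw [← mul_pow]; norm_num
      refine ⟨3 ^ m + a, ?_, ?_⟩ <;> push_cast <;> rw [pow_succ] <;> linarith

/-- The walls are midpoints of gaps of the Cantor set: the intervals in
`exists_mem_Icc_two_mul_of_mem_cantorSet` end at odd multiples of `(1 / 3) ^ m` and begin at even
ones. -/
lemma half_third_pow_le_abs_sub_of_mem_cantorSet (m : ℕ) {x : ℝ} (hx : x ∈ cantorSet) (z : ℤ) :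
    (1 / 3 : ℝ) ^ m / 2 ≤ |x - (-((1 / 3) ^ m / 2) + z * (2 * (1 / 3) ^ m))| := by
  obtain ⟨a, hlow, hhigh⟩ := exists_mem_Icc_two_mul_of_mem_cantorSet m hx
  set q : ℝ := (1 / 3) ^ m
  have hq : 0 < q := by positivity
  rw [le_abs]
  rcases le_or_gt z a with hza | hza
  · left
    have wall_le : (z : ℝ) * q ≤ a * q := mul_le_mul_of_nonneg_right (mod_cast hza) hq.le
    linarith
  · right
    have le_wall : ((a + 1 : ℤ) : ℝ) * q ≤ z * q :=
      mul_le_mul_of_nonneg_right (mod_cast hza) hq.le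
    push_cast at le_wall
    linarith

lemma exists_third_pow_mem_Icc {s : ℝ} (hs : 0 < s) (hs₁ : s ≤ 1) :
    ∃ m : ℕ, (1 / 3 : ℝ) ^ m ∈ Set.Icc (s / 3) s := by
  obtain ⟨m, hlow, hhigh⟩ := exists_nat_pow_near_of_lt_one hs hs₁
    (by norm_num : (0 : ℝ) < 1 / 3) (by norm_num)
  exact ⟨m + 1, by rw [pow_succ]; linarith, hlow.le⟩

/-- The coordinate in the Cantor set stays away from the walls of a single grid, so the colours are
only needed for the other `n` coordinates. -/
lemma hasColouredCoverAtScale_of_cantorSet_coord {n : ℕ} {X : Set (EuclideanSpace ℝ (Fin (n + 1)))}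
    (hX : ∀ x ∈ X, x 0 ∈ cantorSet) {s : ℝ} (hs : 0 < s) (hs₁ : s ≤ 1) :
    HasColouredCoverAtScale X (n + 1) (√(n + 1) * s) (s / (12 * (n + 1))) := by
  obtain ⟨m, hlow, hhigh⟩ := exists_third_pow_mem_Icc (half_pos hs) (by linarith)
  set q : ℝ := (1 / 3) ^ m
  set t : ℝ := s / (n + 1) with ht
  have ht₀ : 0 < t := by positivity
  have hts : t ≤ s := div_le_self hs.le (by linarith [n.cast_nonneg (α := ℝ)])
  have hperiod : ((n + 1 : ℕ) : ℝ) * t = s := by rw [ht]; push_cast; field_simp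
  have hradius : s / (12 * (n + 1)) = t / 12 := by rw [ht]; field_simp
  have hcover := hasColouredCoverAtScale_of_far_from_walls (X := X) (m := n + 1) (r := t / 12)
    (a := fun k => Fin.cons (-(q / 2)) fun _ => k * t) (b := Fin.cons (2 * q) fun _ => s)
    (by positivity) hs.le (Fin.cases ⟨by simp [q], by simp; linarith⟩ fun _ => ⟨hs, le_rfl⟩) ?_
  · simpa [hradius] using hcover
  intro x hx
  obtain ⟨k, hk⟩ := exists_shift_far_from_walls (m := n + 1) (by simp)
    (fun i : Fin n => x i.succ) t
  rw [hperiod] at hk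
  refine ⟨k, Fin.cases (fun z => ?_) fun i z => ?_⟩
  · exact (by linarith : t / 12 ≤ q / 2).trans
      (half_third_pow_le_abs_sub_of_mem_cantorSet m (hX x hx) z)
  · exact (by linarith : t / 12 ≤ t / 2).trans (hk i z)

/-- The ratio of Lebesgue number to mesh in the grid covers of subsets of `C × ℝ^n`: cells with
sides at most `s` have diameter at most `√(n + 1) * s`, and every point has distance at least
`s / (12 * (n + 1))` to the walls of one of the grids. -/
noncomputable def lebesgueRatio (n : ℕ) : ℝ :=
  1 / (12 * (n + 1) * √(n + 1))

lemma one_le_sqrt_natCast_add_one (n : ℕ) : 1 ≤ √((n : ℝ) + 1) :=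
  Real.one_le_sqrt.2 (by simp)

lemma lebesgueRatio_mem_Ioo (n : ℕ) : lebesgueRatio n ∈ Set.Ioo 0 1 := by
  unfold lebesgueRatio
  refine ⟨by positivity, (div_lt_one (by positivity)).2 ?_⟩
  nlinarith [n.cast_nonneg (α := ℝ), one_le_sqrt_natCast_add_one n]

theorem hasColouredCovers_of_cantorSet_coord {n : ℕ} {X : Set (EuclideanSpace ℝ (Fin (n + 1)))}
    (hX : ∀ x ∈ X, x 0 ∈ cantorSet) : HasColouredCovers X (n + 1) (lebesgueRatio n) := by
  refine ⟨1, one_pos, fun δ hδ hδ₁ => ?_⟩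
  have hs : 0 < δ / √((n : ℝ) + 1) := by positivity
  have hs₁ : δ / √((n : ℝ) + 1) ≤ 1 :=
    div_le_one_of_le₀ (hδ₁.trans (one_le_sqrt_natCast_add_one n)) (by positivity)
  have hmesh : √((n : ℝ) + 1) * (δ / √(n + 1)) = δ := by field_simp
  have hlebesgue : δ / √((n : ℝ) + 1) / (12 * (n + 1)) = lebesgueRatio n * δ := by
    unfold lebesgueRatio
    field_simp
  have hcover := hasColouredCoverAtScale_of_cantorSet_coord hX hs hs₁
  rwa [hmesh, hlebesgue] at hcover

/-- For `n ≥ 1`, the space `X = C × [0,1]^n` has capacity dimension exactly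
`n`: some `σ ∈ (0,1)` works with `n+1` colours, and no `σ ∈ (0,1)` works with `n` colours. -/
theorem statement17 (n : ℕ) (hn : 1 ≤ n) :
    (∃ σ : ℝ, σ ∈ Set.Ioo (0 : ℝ) 1 ∧ HasColouredCovers ↥(cantorCube n) (n + 1) σ) ∧
      ∀ σ : ℝ, σ ∈ Set.Ioo (0 : ℝ) 1 → ¬ HasColouredCovers ↥(cantorCube n) n σ :=
  ⟨⟨_, lebesgueRatio_mem_Ioo n, hasColouredCovers_of_cantorSet_coord fun _ hx => hx.1⟩,
    fun σ _ => not_hasColouredCovers_cantorCube n σ⟩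
end
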